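/- Let G ⊂ Diff^1_+([0,1]) be a group such that every element g ∈ G satisfies Dg(x) = 1 at every fixed point x of g (G is without hyperbolic fixed points). Then G is without crossing, i.e., for every f, g ∈ G and every connected component (a,b) of [0,1] ∖ Fix(f), {g(a), g(b)} ∩ (a,b) = ∅. -/

import Mathlib

open Set Filter

noncomputable section

/-- `f` is an orientation-preserving C¹ diffeomorphism of `[0,1]`, modeled as a
bijection of `ℝ` that equals the identity outside `[0,1]`. -/
def DiffOnIcc (f : Equiv.Perm ℝ) : Prop :=
  (∀ x : ℝ, x ∉ Icc (0:ℝ) 1 → f x = x) ∧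
  MapsTo ⇑f (Icc (0:ℝ) 1) (Icc (0:ℝ) 1) ∧
  StrictMonoOn ⇑f (Icc (0:ℝ) 1) ∧
  ContDiffOn ℝ 1 ⇑f (Icc (0:ℝ) 1) ∧
  ContDiffOn ℝ 1 ⇑f.symm (Icc (0:ℝ) 1) ∧
  ∀ x ∈ Icc (0:ℝ) 1, 0 < derivWithin ⇑f (Icc (0:ℝ) 1) x

/-- The derivative (within `[0,1]`) of a diffeomorphism of `[0,1]`. -/
def D (f : Equiv.Perm ℝ) (x : ℝ) : ℝ := derivWithin ⇑f (Icc (0:ℝ) 1) x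

/-- `f` is an orientation-preserving homeomorphism of `[0,1]`, modeled as a
bijection of `ℝ` that equals the identity outside `[0,1]`. -/
def HomeoOnIcc (f : Equiv.Perm ℝ) : Prop :=
  (∀ x : ℝ, x ∉ Icc (0:ℝ) 1 → f x = x) ∧
  MapsTo ⇑f (Icc (0:ℝ) 1) (Icc (0:ℝ) 1) ∧
  StrictMonoOn ⇑f (Icc (0:ℝ) 1) ∧
  ContinuousOn ⇑f (Icc (0:ℝ) 1)

/-- `(a,b)` is a connected component of `[0,1] \ Fix f`: `a`, `b` are fixed and
there is no fixed point in between. -/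
def IsCompFix (f : Equiv.Perm ℝ) (a b : ℝ) : Prop :=
  a ∈ Icc (0:ℝ) 1 ∧ b ∈ Icc (0:ℝ) 1 ∧ a < b ∧ f a = a ∧ f b = b ∧
  ∀ x ∈ Ioo a b, f x ≠ x

/-- `{a,b}` is a pair of successive fixed points of the group `G`. -/
def SuccFix (G : Subgroup (Equiv.Perm ℝ)) (a b : ℝ) : Prop :=
  ∃ g ∈ G, IsCompFix g a b

/-!
If `g a` lies in a component `(a, b)` of the complement of `Fix f`, then post-composing `g` with
suitable powers of `f` gives two elements of `G` that send some interval `I = [a, q]` into disjoint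
subintervals of itself. The `2 ^ n` words of length `n` in these two maps then send `I` to disjoint
intervals, of average length at most `|I| / 2 ^ n`. On the other hand each word `w` maps `I` into
itself, hence has a fixed point there, at which `Dw = 1`; so `-log (|w I| / |I|)` is at most the
distortion of `w` on `I`. Since `log D` is uniformly continuous and the images of `I` under the
words of a given length have bounded total length, the average distortion is at most
`n ε + O(1)` for every `ε > 0`. Taking `ε < log 2`, this contradicts the concavity of `log`. The
case of `g b` follows by reversing the order of the line.
-/

/-! ### Words in a family of elements of a monoid -/

section Words

variable {ι M : Type*} [Monoid M] (h : ι → M)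

/-- The product `h (w 0) * ⋯ * h (w (n - 1))` spelled by the word `w` of length `n`. For
permutations, the last letter acts first. -/
def wordProd {n : ℕ} (w : Fin n → ι) : M := (List.ofFn (h ∘ w)).prod

theorem wordProd_zero (w : Fin 0 → ι) : wordProd h w = 1 := by
  simp [wordProd]

theorem wordProd_cons {n : ℕ} (i : ι) (w : Fin n → ι) :
    wordProd h (Fin.cons i w : Fin (n + 1) → ι) = h i * wordProd h w := by
  simp [wordProd, Function.comp_def]

variable {h} in
theorem wordProd_induction {P : M → Prop} (one : P 1) (mul : ∀ i x, P x → P (h i * x)) {n : ℕ}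
    (w : Fin n → ι) : P (wordProd h w) := by
  induction w using Fin.consInduction with
  | elim0 => simpa only [wordProd_zero] using one
  | cons i w ih => simpa only [wordProd_cons] using mul i _ ih

theorem sum_wordProd_succ [Fintype ι] {A : Type*} [AddCommMonoid A] (F : M → A) (n : ℕ) :
    ∑ w : Fin (n + 1) → ι, F (wordProd h w) =
      ∑ i, ∑ w : Fin n → ι, F (h i * wordProd h w) := by
  rw [← (Fin.consEquiv fun _ => ι).sum_comp, Fintype.sum_prod_type]
  exact Fintype.sum_congr _ _ fun i => Fintype.sum_congr _ _ fun w => by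
    rw [← wordProd_cons]; rfl

end Words

/-! ### Horseshoes -/

/-- The maps `h false` and `h true` form a horseshoe on `[p, q]`: if they are monotone, they send
`[p, q]` into itself, with `h false [p, q]` to the left of `h true [p, q]`. The two images may share
an endpoint. -/
structure IsHorseshoe {α : Type*} [Preorder α] (h : Bool → α → α) (p q : α) : Prop where
  lt : p < q
  left_le : p ≤ h false p
  false_le_true : h false q ≤ h true p
  le_right : h true q ≤ q

namespace IsHorseshoe

theorem of_orderDual {α : Type*} [Preorder α] {h : Bool → α → α} {p q : α}
    (H : IsHorseshoe (α := αᵒᵈ) h p q) : IsHorseshoe (fun i => h !i) q p :=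
  ⟨H.lt, H.le_right, H.false_le_true, H.left_le⟩

theorem mapsTo {α : Type*} [Preorder α] {h : Bool → α → α} {p q : α} (H : IsHorseshoe h p q)
    (hmono : ∀ i, Monotone (h i)) (i : Bool) : MapsTo (h i) (Icc p q) (Icc p q) := by
  refine fun x hx => ⟨?_, ?_⟩
  · calc p ≤ h i p := by
          cases i
          exacts [H.left_le, H.left_le.trans <| (hmono _ H.lt.le).trans H.false_le_true]
      _ ≤ h i x := hmono i hx.1
  · calc h i x ≤ h i q := hmono i hx.2
      _ ≤ q := by
          cases i
          exacts [H.false_le_true.trans <| (hmono _ H.lt.le).trans H.le_right, H.le_right]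

-- The intervals are measured through an arbitrary monotone `φ` so that the induction can absorb
-- the outermost letter of a word into `φ`.
theorem sum_wordProd_sub_le {α : Type*} [Preorder α] {h : Bool → Equiv.Perm α} {p q : α}
    (H : IsHorseshoe (fun i => h i) p q) (hmono : ∀ i, Monotone (h i)) (n : ℕ) {φ : α → ℝ}
    (hφ : Monotone φ) :
    ∑ w : Fin n → Bool, (φ (wordProd h w q) - φ (wordProd h w p)) ≤ φ q - φ p := by
  induction n generalizing φ with
  | zero => simp [wordProd_zero]
  | succ n ih =>
    rw [sum_wordProd_succ h fun x => φ (x q) - φ (x p), Fintype.sum_bool]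
    have htrue := ih (hφ.comp (hmono true))
    have hfalse := ih (hφ.comp (hmono false))
    simp only [Function.comp_apply, Equiv.Perm.mul_apply] at htrue hfalse ⊢
    linarith [hφ H.left_le, hφ H.false_le_true, hφ H.le_right]

end IsHorseshoe

/-! ### Crossings produce horseshoes -/

section Crossing

variable {α : Type*} [ConditionallyCompleteLinearOrder α]

theorem exists_zpow_lt_of_forall_ne {f : Equiv.Perm α} (hf : StrictMono f) {a b : α}
    (hne : ∀ x ∈ Ioo a b, f x ≠ x) {x y : α} (hx : x ∈ Ioo a b) (hy : y ∈ Ioo a b) :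
    ∃ n : ℤ, (f ^ n) x < y := by
  by_contra! hle
  have hbdd : BddBelow (range fun n : ℤ => (f ^ n) x) := ⟨y, forall_mem_range.2 hle⟩
  have hfix : f (⨅ n : ℤ, (f ^ n) x) = ⨅ n : ℤ, (f ^ n) x := calc
    f (⨅ n : ℤ, (f ^ n) x) = ⨅ n : ℤ, f ((f ^ n) x) :=
      (hf.orderIsoOfSurjective f f.surjective).map_ciInf hbdd
    _ = ⨅ n : ℤ, (f ^ (n + 1)) x := by
      simp only [add_comm _ (1 : ℤ), zpow_one_add, Equiv.Perm.mul_apply]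
    _ = ⨅ n : ℤ, (f ^ n) x := (Equiv.addRight (1 : ℤ)).iInf_comp (g := fun n => (f ^ n) x)
  exact hne _ ⟨hy.1.trans_le (le_ciInf hle), (ciInf_le hbdd 0).trans_lt hx.2⟩ hfix

theorem exists_isHorseshoe_of_apply_left_mem_Ioo [DenselyOrdered α] {G : Subgroup (Equiv.Perm α)}
    (hG : ∀ g ∈ G, StrictMono g) {f g : Equiv.Perm α} (hf : f ∈ G) (hg : g ∈ G) {a b : α}
    (ha : f a = a) (hb : f b = b) (hne : ∀ x ∈ Ioo a b, f x ≠ x) (hga : g a ∈ Ioo a b) :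
    ∃ h : Bool → Equiv.Perm α, (∀ i, h i ∈ G) ∧ ∃ q ∈ Ioo a b, IsHorseshoe (fun i => h i) a q := by
  have hfn (n : ℤ) : StrictMono (f ^ n) := hG _ (G.zpow_mem hf n)
  have hfna (n : ℤ) : (f ^ n) a = a := Equiv.Perm.zpow_apply_eq_self_of_apply_eq_self ha n
  have hfnb (n : ℤ) : (f ^ n) b = b := Equiv.Perm.zpow_apply_eq_self_of_apply_eq_self hb n
  obtain ⟨q, hq, hgq⟩ : ∃ q ∈ Ioo a b, g q ∈ Ioo a b := by
    have ha_lt : a < g⁻¹ b := by simpa using hG _ (G.inv_mem hg) hga.2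
    obtain ⟨q, haq, hq⟩ := exists_between (lt_min ha_lt (hga.1.trans hga.2))
    rw [lt_min_iff] at hq
    exact ⟨q, ⟨haq, hq.2⟩, hga.1.trans (hG g hg haq), by simpa using hG g hg hq.1⟩
  obtain ⟨N, hN⟩ := exists_zpow_lt_of_forall_ne (hG f hf) hne hgq hq
  have hfga : (f ^ N) (g a) ∈ Ioo a b :=
    ⟨(hfna N).symm.trans_lt (hfn N hga.1), (hfn N hga.2).trans_eq (hfnb N)⟩
  obtain ⟨M, hM⟩ := exists_zpow_lt_of_forall_ne (hG f hf) hne hgq hfga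
  exact ⟨fun i => f ^ (bif i then N else M) * g, fun i => G.mul_mem (G.zpow_mem hf _) hg, q, hq,
    { lt := hq.1
      left_le := (hfna M).symm.trans_le ((hfn M).monotone hga.1.le)
      false_le_true := hM.le
      le_right := hN.le }⟩

theorem exists_isHorseshoe_of_apply_right_mem_Ioo [DenselyOrdered α] {G : Subgroup (Equiv.Perm α)}
    (hG : ∀ g ∈ G, StrictMono g) {f g : Equiv.Perm α} (hf : f ∈ G) (hg : g ∈ G) {a b : α}
    (ha : f a = a) (hb : f b = b) (hne : ∀ x ∈ Ioo a b, f x ≠ x) (hgb : g b ∈ Ioo a b) :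
    ∃ h : Bool → Equiv.Perm α, (∀ i, h i ∈ G) ∧ ∃ p ∈ Ioo a b, IsHorseshoe (fun i => h i) p b := by
  obtain ⟨h, hh, p, hp, H⟩ := @exists_isHorseshoe_of_apply_left_mem_Ioo αᵒᵈ _ _ G
    (fun g hg => (hG g hg).dual) f g hf hg b a hb ha (fun x hx => hne x ⟨hx.2, hx.1⟩)
    ⟨hgb.2, hgb.1⟩
  exact ⟨fun i => h !i, fun i => hh !i, p, ⟨hp.2, hp.1⟩, .of_orderDual (α := α) H⟩

end Crossing

/-! ### Distortion of diffeomorphisms of the interval -/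

theorem exists_dist_le_add_mul_dist {X Y : Type*} [PseudoMetricSpace X] [PseudoMetricSpace Y]
    {s : Set X} (hs : IsCompact s) {u : X → Y} (hu : ContinuousOn u s) {ε : ℝ} (hε : 0 < ε) :
    ∃ K, 0 ≤ K ∧ ∀ x ∈ s, ∀ y ∈ s, dist (u x) (u y) ≤ ε + K * dist x y := by
  obtain ⟨δ, hδ, huδ⟩ :=
    Metric.uniformContinuousOn_iff.1 (hs.uniformContinuousOn_of_continuous hu) ε hε
  set C := Metric.diam (u '' s)
  have hK : 0 ≤ C / δ := div_nonneg Metric.diam_nonneg hδ.le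
  refine ⟨C / δ, hK, fun x hx y hy => ?_⟩
  rcases lt_or_ge (dist x y) δ with hxy | hxy
  · exact (huδ x hx y hy hxy).le.trans (le_add_of_nonneg_right (mul_nonneg hK dist_nonneg))
  · calc dist (u x) (u y) ≤ C :=
          Metric.dist_le_diam_of_mem (hs.image_of_continuousOn hu).isBounded
            (mem_image_of_mem u hx) (mem_image_of_mem u hy)
      _ = C / δ * δ := (div_mul_cancel₀ C hδ.ne').symm
      _ ≤ C / δ * dist x y := by gcongr
      _ ≤ ε + C / δ * dist x y := by linarith

/-- The distortion of `f` on `s`: the oscillation of `log D f` on `s`. -/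
def distortion (f : Equiv.Perm ℝ) (s : Set ℝ) : ℝ :=
  Metric.diam ((fun x => Real.log (D f x)) '' s)

theorem distortion_nonneg (f : Equiv.Perm ℝ) (s : Set ℝ) : 0 ≤ distortion f s :=
  Metric.diam_nonneg

theorem distortion_le {f : Equiv.Perm ℝ} {s : Set ℝ} {C : ℝ} (hC : 0 ≤ C)
    (h : ∀ x ∈ s, ∀ y ∈ s, dist (Real.log (D f x)) (Real.log (D f y)) ≤ C) :
    distortion f s ≤ C :=
  Metric.diam_le_of_forall_dist_le hC <| forall_mem_image.2 fun x hx =>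
    forall_mem_image.2 fun y hy => h x hx y hy

theorem distortion_one {s : Set ℝ} (hs : s ⊆ Icc 0 1) : distortion 1 s = 0 := by
  have hD (x : ℝ) (hx : x ∈ s) : D 1 x = 1 :=
    derivWithin_id x _ (uniqueDiffOn_Icc_zero_one x (hs hx))
  refine le_antisymm (distortion_le le_rfl fun x hx y hy => ?_) (distortion_nonneg 1 s)
  rw [hD x hx, hD y hy, dist_self]

namespace DiffOnIcc

variable {f g : Equiv.Perm ℝ}

theorem mapsTo (hf : DiffOnIcc f) : MapsTo f (Icc 0 1) (Icc 0 1) := hf.2.1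

theorem strictMono (hf : DiffOnIcc f) : StrictMono f := by
  obtain ⟨hout, hmaps, hmono, -⟩ := hf
  intro x y hxy
  by_cases hx : x ∈ Icc (0 : ℝ) 1 <;> by_cases hy : y ∈ Icc (0 : ℝ) 1
  · exact hmono hx hy hxy
  · have hy1 : 1 < y := not_le.1 fun hy1 => hy ⟨hx.1.trans hxy.le, hy1⟩
    rw [hout y hy]
    exact (hmaps hx).2.trans_lt hy1
  · have hx0 : x < 0 := not_le.1 fun hx0 => hx ⟨hx0, hxy.le.trans hy.2⟩
    rw [hout x hx]
    exact hx0.trans_le (hmaps hy).1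
  · rwa [hout x hx, hout y hy]

theorem monotone (hf : DiffOnIcc f) : Monotone f := hf.strictMono.monotone

theorem continuousOn (hf : DiffOnIcc f) : ContinuousOn f (Icc 0 1) := hf.2.2.2.1.continuousOn

theorem D_pos (hf : DiffOnIcc f) {x : ℝ} (hx : x ∈ Icc (0 : ℝ) 1) : 0 < D f x :=
  hf.2.2.2.2.2 x hx

theorem hasDerivWithinAt (hf : DiffOnIcc f) {x : ℝ} (hx : x ∈ Icc (0 : ℝ) 1) :
    HasDerivWithinAt f (D f x) (Icc 0 1) x :=
  (hf.2.2.2.1.differentiableOn one_ne_zero x hx).hasDerivWithinAt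

theorem exists_D_eq_slope (hf : DiffOnIcc f) {p q : ℝ} (hpq : p < q) (hI : Icc p q ⊆ Icc 0 1) :
    ∃ x ∈ Icc p q, D f x = (f q - f p) / (q - p) := by
  have hderiv (x : ℝ) (hx : x ∈ Ioo p q) : HasDerivAt f (D f x) x :=
    (hf.hasDerivWithinAt (hI (Ioo_subset_Icc_self hx))).hasDerivAt
      (mem_of_superset (Icc_mem_nhds hx.1 hx.2) hI)
  obtain ⟨x, hx, hDx⟩ := exists_hasDerivAt_eq_slope f (D f) hpq (hf.continuousOn.mono hI) hderiv
  exact ⟨x, Ioo_subset_Icc_self hx, hDx⟩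

theorem continuousOn_log_D (hf : DiffOnIcc f) :
    ContinuousOn (fun x => Real.log (D f x)) (Icc 0 1) :=
  (hf.2.2.2.1.continuousOn_derivWithin uniqueDiffOn_Icc_zero_one le_rfl).log
    fun _ hx => (hf.D_pos hx).ne'

theorem log_D_mul (hf : DiffOnIcc f) (hg : DiffOnIcc g) {x : ℝ} (hx : x ∈ Icc (0 : ℝ) 1) :
    Real.log (D (f * g) x) = Real.log (D f (g x)) + Real.log (D g x) := by
  have hD : D (f * g) x = D f (g x) * D g x :=
    ((hf.hasDerivWithinAt (hg.mapsTo hx)).comp x (hg.hasDerivWithinAt hx) hg.mapsTo).derivWithin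
      (uniqueDiffOn_Icc_zero_one x hx)
  rw [hD, Real.log_mul (hf.D_pos (hg.mapsTo hx)).ne' (hg.D_pos hx).ne']

theorem dist_log_D_le_distortion (hf : DiffOnIcc f) {s : Set ℝ} (hs : s ⊆ Icc 0 1) {x y : ℝ}
    (hx : x ∈ s) (hy : y ∈ s) : dist (Real.log (D f x)) (Real.log (D f y)) ≤ distortion f s :=
  Metric.dist_le_diam_of_mem
    ((isCompact_Icc.image_of_continuousOn hf.continuousOn_log_D).isBounded.subset (image_mono hs))
    (mem_image_of_mem _ hx) (mem_image_of_mem _ hy)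

theorem distortion_mul_le (hf : DiffOnIcc f) (hg : DiffOnIcc g) {s : Set ℝ} (hs : s ⊆ Icc 0 1) :
    distortion (f * g) s ≤ distortion f (g '' s) + distortion g s := by
  refine distortion_le (add_nonneg (distortion_nonneg _ _) (distortion_nonneg _ _))
    fun x hx y hy => ?_
  rw [hf.log_D_mul hg (hs hx), hf.log_D_mul hg (hs hy)]
  exact (dist_add_add_le _ _ _ _).trans <| add_le_add
    (hf.dist_log_D_le_distortion (hg.mapsTo.mono_left hs).image_subset
      (mem_image_of_mem g hx) (mem_image_of_mem g hy))
    (hg.dist_log_D_le_distortion hs hx hy)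

theorem exists_distortion_le (hf : DiffOnIcc f) {ε : ℝ} (hε : 0 < ε) :
    ∃ K, 0 ≤ K ∧ ∀ s ⊆ Icc (0 : ℝ) 1, distortion f s ≤ ε + K * Metric.diam s := by
  obtain ⟨K, hK, hdist⟩ := exists_dist_le_add_mul_dist isCompact_Icc hf.continuousOn_log_D hε
  refine ⟨K, hK, fun s hs => distortion_le (by positivity) fun x hx y hy =>
    (hdist x (hs hx) y (hs hy)).trans ?_⟩
  gcongr
  exact Metric.dist_le_diam_of_mem (Metric.isBounded_Icc (0 : ℝ) 1 |>.subset hs) hx hy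

theorem diam_image_Icc_le (hf : DiffOnIcc f) {p q : ℝ} (hpq : p ≤ q) :
    Metric.diam (f '' Icc p q) ≤ f q - f p :=
  (Metric.diam_mono (hf.monotone.mapsTo_Icc.image_subset) (Metric.isBounded_Icc _ _)).trans_eq
    (Real.diam_Icc (hf.monotone hpq))

theorem neg_log_slope_le_distortion (hf : DiffOnIcc f) {p q : ℝ} (hpq : p < q)
    (hI : Icc p q ⊆ Icc 0 1) (hmaps : MapsTo f (Icc p q) (Icc p q))
    (hfix : ∀ x ∈ Icc p q, f x = x → D f x = 1) :
    -Real.log ((f q - f p) / (q - p)) ≤ distortion f (Icc p q) := by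
  obtain ⟨x, hx, hfx⟩ :=
    exists_mem_Icc_isFixedPt_of_mapsTo (hf.continuousOn.mono hI) hpq.le hmaps
  obtain ⟨y, hy, hDy⟩ := hf.exists_D_eq_slope hpq hI
  have hlogx : Real.log (D f x) = 0 := by rw [hfix x hx hfx, Real.log_one]
  calc -Real.log ((f q - f p) / (q - p)) = Real.log (D f x) - Real.log (D f y) := by
        rw [hlogx, hDy, zero_sub]
    _ ≤ dist (Real.log (D f x)) (Real.log (D f y)) := le_abs_self _
    _ ≤ distortion f (Icc p q) := hf.dist_log_D_le_distortion hI hx hy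

end DiffOnIcc

/-! ### Horseshoes have hyperbolic fixed points -/

theorem card_mul_log_card_le_sum_neg_log {ι : Type*} (s : Finset ι) {t : ι → ℝ}
    (ht : ∀ i ∈ s, 0 < t i) (hsum : ∑ i ∈ s, t i ≤ 1) :
    s.card * Real.log s.card ≤ ∑ i ∈ s, -Real.log (t i) := by
  have htangent : ∀ i ∈ s, Real.log s.card + 1 - s.card * t i ≤ -Real.log (t i) := fun i hi => by
    have hcard : (0 : ℝ) < s.card := mod_cast Finset.card_pos.2 ⟨i, hi⟩
    have hlog := Real.log_le_sub_one_of_pos (mul_pos hcard (ht i hi))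
    rw [Real.log_mul hcard.ne' (ht i hi).ne'] at hlog
    linarith
  calc (s.card : ℝ) * Real.log s.card
      ≤ s.card * (Real.log s.card + 1) - s.card * ∑ i ∈ s, t i := by
        linarith [mul_le_of_le_one_right s.card.cast_nonneg hsum]
    _ = ∑ i ∈ s, (Real.log s.card + 1 - s.card * t i) := by
        rw [Finset.sum_sub_distrib, Finset.sum_const, nsmul_eq_mul, Finset.mul_sum]
    _ ≤ ∑ i ∈ s, -Real.log (t i) := Finset.sum_le_sum htangent

namespace IsHorseshoe

variable {h : Bool → Equiv.Perm ℝ} {p q : ℝ}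

theorem sum_distortion_le (H : IsHorseshoe (fun i => h i) p q) (hI : Icc p q ⊆ Icc 0 1)
    (hdiff : ∀ i, DiffOnIcc (h i)) (hword : ∀ n (w : Fin n → Bool), DiffOnIcc (wordProd h w))
    {ε K : ℝ} (hK : 0 ≤ K)
    (hε : ∀ i, ∀ s ⊆ Icc (0 : ℝ) 1, distortion (h i) s ≤ ε + K * Metric.diam s) (n : ℕ) :
    ∑ w : Fin n → Bool, distortion (wordProd h w) (Icc p q) ≤
      2 ^ n * (n * ε) + 2 * (2 ^ n - 1) * (K * (q - p)) := by
  induction n with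
  | zero => simp [wordProd_zero, distortion_one hI]
  | succ n ih =>
    have hlength : ∑ w : Fin n → Bool, (wordProd h w q - wordProd h w p) ≤ q - p :=
      H.sum_wordProd_sub_le (fun i => (hdiff i).monotone) n monotone_id
    have hletter (i : Bool) (w : Fin n → Bool) :
        distortion (h i * wordProd h w) (Icc p q) ≤
          ε + K * (wordProd h w q - wordProd h w p) + distortion (wordProd h w) (Icc p q) := by
      refine ((hdiff i).distortion_mul_le (hword n w) hI).trans ?_
      gcongr
      refine (hε i _ ((hword n w).mapsTo.mono_left hI).image_subset).trans ?_
      gcongr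
      exact (hword n w).diam_image_Icc_le H.lt.le
    have hstep (i : Bool) : ∑ w : Fin n → Bool, distortion (h i * wordProd h w) (Icc p q) ≤
        2 ^ n * ε + K * (q - p) + (2 ^ n * (n * ε) + 2 * (2 ^ n - 1) * (K * (q - p))) := by
      refine (Finset.sum_le_sum fun w _ => hletter i w).trans ?_
      rw [Finset.sum_add_distrib, Finset.sum_add_distrib, ← Finset.mul_sum]
      gcongr
      simp
    rw [sum_wordProd_succ h fun x => distortion x (Icc p q), Fintype.sum_bool]
    refine (add_le_add (hstep true) (hstep false)).trans_eq ?_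
    push_cast
    ring

theorem two_pow_mul_log_le_sum_distortion (H : IsHorseshoe (fun i => h i) p q)
    (hI : Icc p q ⊆ Icc 0 1) (hdiff : ∀ i, DiffOnIcc (h i))
    (hword : ∀ n (w : Fin n → Bool), DiffOnIcc (wordProd h w))
    (hfix : ∀ n (w : Fin n → Bool), ∀ x ∈ Icc p q, wordProd h w x = x → D (wordProd h w) x = 1)
    (n : ℕ) :
    2 ^ n * (n * Real.log 2) ≤ ∑ w : Fin n → Bool, distortion (wordProd h w) (Icc p q) := by
  have hpq : 0 < q - p := sub_pos.2 H.lt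
  have hmono (i : Bool) : Monotone (h i) := (hdiff i).monotone
  have hmaps (w : Fin n → Bool) : MapsTo ⇑(wordProd h w) (Icc p q) (Icc p q) :=
    wordProd_induction (P := fun x : Equiv.Perm ℝ => MapsTo x (Icc p q) (Icc p q)) (mapsTo_id _)
      (fun i _ hx => (H.mapsTo hmono i).comp hx) w
  have hpos (w : Fin n → Bool) : 0 < (wordProd h w q - wordProd h w p) / (q - p) :=
    div_pos (sub_pos.2 ((hword n w).strictMono H.lt)) hpq
  have hsum : ∑ w : Fin n → Bool, (wordProd h w q - wordProd h w p) / (q - p) ≤ 1 := by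
    rw [← Finset.sum_div, div_le_one hpq]
    exact H.sum_wordProd_sub_le hmono n monotone_id
  calc 2 ^ n * (n * Real.log 2)
      ≤ ∑ w : Fin n → Bool, -Real.log ((wordProd h w q - wordProd h w p) / (q - p)) := by
        simpa using card_mul_log_card_le_sum_neg_log Finset.univ (fun w _ => hpos w) hsum
    _ ≤ ∑ w : Fin n → Bool, distortion (wordProd h w) (Icc p q) :=
        Finset.sum_le_sum fun w _ =>
          (hword n w).neg_log_slope_le_distortion H.lt hI (hmaps w) (hfix n w)

end IsHorseshoe

theorem not_isHorseshoe_of_forall_D_eq_one {G : Subgroup (Equiv.Perm ℝ)} (hG : ∀ g ∈ G, DiffOnIcc g)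
    (hnh : ∀ g ∈ G, ∀ x ∈ Icc (0 : ℝ) 1, g x = x → D g x = 1) {h : Bool → Equiv.Perm ℝ}
    (hh : ∀ i, h i ∈ G) {p q : ℝ} (hI : Icc p q ⊆ Icc 0 1) :
    ¬ IsHorseshoe (fun i => h i) p q := by
  intro H
  have hdiff (i : Bool) : DiffOnIcc (h i) := hG _ (hh i)
  have hmem (n : ℕ) (w : Fin n → Bool) : wordProd h w ∈ G :=
    wordProd_induction G.one_mem (fun i _ => G.mul_mem (hh i)) w
  choose K hK_nonneg hK using fun i => (hdiff i).exists_distortion_le one_half_pos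
  obtain ⟨C, hC⟩ := Finite.exists_le K
  have hC_nonneg : 0 ≤ C := (hK_nonneg true).trans (hC true)
  have hε (i : Bool) (s : Set ℝ) (hs : s ⊆ Icc 0 1) :
      distortion (h i) s ≤ 1 / 2 + C * Metric.diam s := by
    refine (hK i s hs).trans ?_
    gcongr
    exact hC i
  have hgrowth (n : ℕ) : n * (Real.log 2 - 1 / 2) ≤ 2 * (C * (q - p)) := by
    have hlower := H.two_pow_mul_log_le_sum_distortion hI hdiff (fun n w => hG _ (hmem n w))
      (fun n w x hx => hnh _ (hmem n w) x (hI hx)) n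
    have hupper := H.sum_distortion_le hI hdiff (fun n w => hG _ (hmem n w)) hC_nonneg hε n
    have hCI : 0 ≤ C * (q - p) := mul_nonneg hC_nonneg (sub_nonneg.2 H.lt.le)
    refine le_of_mul_le_mul_left ?_ (pow_pos two_pos n : (0 : ℝ) < 2 ^ n)
    linarith
  have hlog : 0 < Real.log 2 - 1 / 2 := by linarith [Real.log_two_gt_d9]
  obtain ⟨n, hn⟩ := exists_nat_gt (2 * (C * (q - p)) / (Real.log 2 - 1 / 2))
  rw [div_lt_iff₀ hlog] at hn
  exact (hgrowth n).not_gt hn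

/-- a group of C¹ diffeomorphisms of `[0,1]` without hyperbolic
fixed points is without crossing. -/
theorem stmt10 (G : Subgroup (Equiv.Perm ℝ)) (hG : ∀ g ∈ G, DiffOnIcc g)
    (hnh : ∀ g ∈ G, ∀ x ∈ Icc (0:ℝ) 1, g x = x → D g x = 1) :
    ∀ f ∈ G, ∀ g ∈ G, ∀ a b : ℝ, IsCompFix f a b →
      g a ∉ Ioo a b ∧ g b ∉ Ioo a b := by
  rintro f hf g hg a b ⟨ha, hb, -, hfa, hfb, hne⟩
  have hmono : ∀ g ∈ G, StrictMono g := fun g hg => (hG g hg).strictMono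
  constructor
  · intro hga
    obtain ⟨h, hh, q, hq, H⟩ := exists_isHorseshoe_of_apply_left_mem_Ioo
      hmono hf hg hfa hfb hne hga
    exact not_isHorseshoe_of_forall_D_eq_one hG hnh hh (Icc_subset_Icc ha.1 (hq.2.le.trans hb.2)) H
  · intro hgb
    obtain ⟨h, hh, p, hp, H⟩ := exists_isHorseshoe_of_apply_right_mem_Ioo
      hmono hf hg hfa hfb hne hgb
    exact not_isHorseshoe_of_forall_D_eq_one hG hnh hh (Icc_subset_Icc (ha.1.trans hp.1.le) hb.2) H
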